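/- arXiv:math/0504496 — 3 statements merged into one kernel-verified Lean document; each statement's English description precedes it below -/
import Mathlib

section
/- Let κ ∈ (0,4], set α = 2(4−κ)/κ, and define f : [0,π] → ℝ by f(θ) = (∫_θ^π (sin u)^α du) / (∫_0^π (sin u)^α du). Then f is continuous on [0,π] and twice continuously differentiable on (0,π), it satisfies f(0) = 1, f(π) = 0, and for all θ ∈ (0,π) it satisfies the differential equation (κ/2)·sin²(θ)·f''(θ) + ((κ−4)/2)·sin(2θ)·f'(θ) = 0. Moreover f is the unique function with these properties: if g : [0,π] → ℝ is continuous, twice continuously differentiable on (0,π), satisfies the same differential equation on (0,π), and g(0) = 1, g(π) = 0, then g = f. -/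
open Real Set

/-!
Wherever `sin θ ≠ 0`, the equation says that the Wronskian of `f'` and `sin ^ α` vanishes, so that
`f'` is a constant multiple of `sin ^ α`. For `κ < 8` the exponent satisfies `-1 < α`, hence
`sin ^ α` is integrable on `[0, π]`; the fundamental theorem of calculus recovers `f` from `f'`, and
the two boundary values determine the constant.
-/

section Wronskian

variable {𝕜 : Type*} [RCLike 𝕜] {s : Set 𝕜} {y y' w w' : 𝕜 → 𝕜}

theorem exists_eqOn_const_mul_of_wronskian_eq_zero (hs : IsOpen s) (hs' : IsPreconnected s)
    (hy : ∀ x ∈ s, HasDerivAt y (y' x) x) (hw : ∀ x ∈ s, HasDerivAt w (w' x) x)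
    (hw0 : ∀ x ∈ s, w x ≠ 0) (hW : ∀ x ∈ s, y' x * w x - y x * w' x = 0) :
    ∃ c, EqOn y (fun x ↦ c * w x) s := by
  have hquot : ∀ x ∈ s, HasDerivAt (fun x ↦ y x / w x) 0 x := fun x hx ↦
    ((hy x hx).fun_div (hw x hx) (hw0 x hx)).congr_deriv (by rw [hW x hx, zero_div])
  obtain ⟨c, hc⟩ := hs.exists_is_const_of_deriv_eq_zero hs'
    (fun x hx ↦ (hquot x hx).differentiableAt.differentiableWithinAt)
    (fun x hx ↦ (hquot x hx).deriv)
  exact ⟨c, fun x hx ↦ (div_eq_iff (hw0 x hx)).mp (hc x hx)⟩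

end Wronskian

section NormalizedTail

open MeasureTheory

/-- The fraction of the total integral of `w` over `[a, b]` that lies to the right of a point. For a
positive weight `w` this is the tail distribution function of the probability measure on `[a, b]`
with density proportional to `w`. If the total integral is `0`, so is the quotient. -/
noncomputable def normalizedTail (w : ℝ → ℝ) (a b x : ℝ) : ℝ :=
  (∫ u in x..b, w u) / ∫ u in a..b, w u

variable {w : ℝ → ℝ} {a b x : ℝ}

theorem normalizedTail_left (h : ∫ u in a..b, w u ≠ 0) : normalizedTail w a b a = 1 :=
  div_self h

theorem normalizedTail_right : normalizedTail w a b b = 0 := by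
  simp [normalizedTail]

theorem continuousOn_normalizedTail (hint : IntervalIntegrable w volume a b) :
    ContinuousOn (normalizedTail w a b) (uIcc a b) :=
  (intervalIntegral.continuousOn_primitive_interval_left
    ((intervalIntegrable_iff' (by simp)).mp hint)).div_const _

theorem hasDerivAt_normalizedTail (hint : IntervalIntegrable w volume a b)
    (hw : ContinuousOn w (Ioo a b)) (hx : x ∈ Ioo a b) :
    HasDerivAt (normalizedTail w a b) (-w x / ∫ u in a..b, w u) x := by
  have hint_x : IntervalIntegrable w volume x b :=
    hint.mono_set (uIcc_subset_uIcc_right (Icc_subset_uIcc (Ioo_subset_Icc_self hx)))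
  exact (intervalIntegral.integral_hasDerivAt_left hint_x
    (hw.stronglyMeasurableAtFilter isOpen_Ioo x hx)
    (hw.continuousAt (isOpen_Ioo.mem_nhds hx))).div_const _

theorem eqOn_deriv_normalizedTail (hint : IntervalIntegrable w volume a b)
    (hw : ContinuousOn w (Ioo a b)) :
    EqOn (deriv (normalizedTail w a b)) (fun x ↦ -w x / ∫ u in a..b, w u) (Ioo a b) :=
  fun _ hx ↦ (hasDerivAt_normalizedTail hint hw hx).deriv

theorem hasDerivAt_deriv_normalizedTail {w' : ℝ}
    (hint : IntervalIntegrable w volume a b) (hw : ContinuousOn w (Ioo a b))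
    (hx : x ∈ Ioo a b) (hw' : HasDerivAt w w' x) :
    HasDerivAt (deriv (normalizedTail w a b)) (-w' / ∫ u in a..b, w u) x :=
  (hw'.fun_neg.div_const _).congr_of_eventuallyEq
    ((eqOn_deriv_normalizedTail hint hw).eventuallyEq_of_mem (isOpen_Ioo.mem_nhds hx))

theorem contDiffOn_normalizedTail {n : ℕ∞} (hint : IntervalIntegrable w volume a b)
    (hw : ContDiffOn ℝ n w (Ioo a b)) : ContDiffOn ℝ (n + 1) (normalizedTail w a b) (Ioo a b) := by
  rw [contDiffOn_succ_iff_deriv_of_isOpen isOpen_Ioo]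
  refine ⟨fun x hx ↦ ?_, by simp, ?_⟩
  · exact (hasDerivAt_normalizedTail hint hw.continuousOn hx).differentiableAt
      |>.differentiableWithinAt
  · exact (hw.neg.div_const _).congr (eqOn_deriv_normalizedTail hint hw.continuousOn)

theorem eqOn_normalizedTail_of_hasDerivAt {y : ℝ → ℝ} {c : ℝ}
    (hint : IntervalIntegrable w volume a b) (hy : ContinuousOn y (Icc a b))
    (hy' : ∀ x ∈ Ioo a b, HasDerivAt y (c * w x) x) (hya : y a = 1) (hyb : y b = 0) :
    EqOn y (normalizedTail w a b) (Icc a b) := by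
  have hFTC : ∀ x ∈ Icc a b, c * ∫ u in x..b, w u = -y x := fun x hx ↦ by
    have hint_x : IntervalIntegrable w volume x b :=
      hint.mono_set (uIcc_subset_uIcc_right (Icc_subset_uIcc hx))
    rw [← intervalIntegral.integral_const_mul,
      intervalIntegral.integral_eq_sub_of_hasDerivAt_of_le hx.2
        (hy.mono (Icc_subset_Icc_left hx.1))
        (fun u hu ↦ hy' u (Ioo_subset_Ioo_left hx.1 hu)) (hint_x.const_mul c), hyb, zero_sub]
  intro x hx
  have hmass : c * ∫ u in a..b, w u = -1 := by
    rw [hFTC a (left_mem_Icc.mpr (hx.1.trans hx.2)), hya]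
  have hmass_ne : ∫ u in a..b, w u ≠ 0 := right_ne_zero_of_mul (hmass.trans_ne (by simp))
  rw [normalizedTail, eq_div_iff hmass_ne]
  linear_combination (∫ u in a..b, w u) * hFTC x hx - (∫ u in x..b, w u) * hmass

end NormalizedTail

section SinRpow

open MeasureTheory

variable {α : ℝ}

theorem sinc_pos_of_abs_lt_pi {x : ℝ} (hx : |x| < π) : 0 < sinc x := by
  rcases eq_or_ne x 0 with rfl | hx0
  · simp
  have hx_pos : 0 < |x| := abs_pos.mpr hx0
  have hsinc_abs : sinc |x| = sinc x := by rcases abs_choice x with h | h <;> simp [h]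
  rw [← hsinc_abs, sinc_of_ne_zero hx_pos.ne']
  exact div_pos (sin_pos_of_pos_of_lt_pi hx_pos hx) hx_pos

theorem intervalIntegrable_sin_rpow (hα : -1 < α) :
    IntervalIntegrable (fun u ↦ sin u ^ α) volume 0 π := by
  have hsinc_pos : ∀ u ∈ Icc 0 (π / 2), 0 < sinc u := fun u hu ↦
    sinc_pos_of_abs_lt_pi (by rw [abs_of_nonneg hu.1]; linarith [hu.2, pi_pos])
  have hleft : IntervalIntegrable (fun u ↦ sin u ^ α) volume 0 (π / 2) := by
    have hsinc : ContinuousOn (fun u ↦ sinc u ^ α) (uIcc 0 (π / 2)) := by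
      rw [uIcc_of_le (by positivity)]
      exact continuous_sinc.continuousOn.rpow_const fun u hu ↦ .inl (hsinc_pos u hu).ne'
    refine ((intervalIntegral.intervalIntegrable_rpow' hα).mul_continuousOn hsinc).congr_uIoo ?_
    rw [uIoo_of_le (by positivity)]
    intro u hu
    simp only
    rw [← mul_rpow hu.1.le (hsinc_pos u (Ioo_subset_Icc_self hu)).le, sinc_of_ne_zero hu.1.ne',
      mul_div_cancel₀ _ hu.1.ne']
  have hright : IntervalIntegrable (fun u ↦ sin u ^ α) volume π (π / 2) := by
    simpa [sin_pi_sub, sub_half] using hleft.comp_sub_left π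
  exact hleft.trans hright.symm

theorem integral_sin_rpow_pos (hα : -1 < α) : 0 < ∫ u in (0 : ℝ)..π, sin u ^ α :=
  intervalIntegral.intervalIntegral_pos_of_pos_on (intervalIntegrable_sin_rpow hα)
    (fun _ hu ↦ rpow_pos_of_pos (sin_pos_of_mem_Ioo hu) α) pi_pos

theorem contDiffOn_sin_rpow {n : WithTop ℕ∞} : ContDiffOn ℝ n (fun u ↦ sin u ^ α) (Ioo 0 π) :=
  contDiff_sin.contDiffOn.rpow_const_of_ne fun _ hu ↦ (sin_pos_of_mem_Ioo hu).ne'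

theorem hasDerivAt_sin_rpow {θ : ℝ} (hθ : sin θ ≠ 0) :
    HasDerivAt (fun u ↦ sin u ^ α) (cos θ * α * sin θ ^ (α - 1)) θ :=
  (hasDerivAt_sin θ).rpow_const (.inl hθ)

end SinRpow

section RightPassage

/-- `g` solves on `(0, π)` the second-order equation for the probability that a point at angle `θ`
lies to the right of a chordal `SLE_κ` trace. The equation is stated with `deriv`, so it presupposes
that `g` is twice differentiable on `(0, π)`. -/
def SolvesRightPassageODE (κ : ℝ) (g : ℝ → ℝ) : Prop :=
  ∀ θ ∈ Ioo (0 : ℝ) π,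
    κ / 2 * sin θ ^ 2 * deriv (deriv g) θ + (κ - 4) / 2 * sin (2 * θ) * deriv g θ = 0

variable {κ α θ : ℝ}

theorem neg_one_lt_sle_exponent (hκ0 : 0 < κ) (hκ8 : κ < 8) (hα : α = 2 * (4 - κ) / κ) :
    -1 < α := by
  rw [hα, lt_div_iff₀ hκ0]
  linarith

theorem right_passage_ode_iff_wronskian_eq_zero {p q : ℝ} (hκ : κ ≠ 0)
    (hα : α = 2 * (4 - κ) / κ) (hθ : 0 < sin θ) :
    κ / 2 * sin θ ^ 2 * q + (κ - 4) / 2 * sin (2 * θ) * p = 0 ↔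
      q * sin θ ^ α - p * (cos θ * α * sin θ ^ (α - 1)) = 0 := by
  have hακ : α * κ = 2 * (4 - κ) := by rw [hα, div_mul_cancel₀ _ hκ]
  have hode : κ / 2 * sin θ ^ 2 * q + (κ - 4) / 2 * sin (2 * θ) * p =
      κ / 2 * sin θ * (sin θ * q - α * cos θ * p) := by
    rw [sin_two_mul]
    linear_combination (sin θ * cos θ * p / 2) * hακ
  have hwronskian : q * sin θ ^ α - p * (cos θ * α * sin θ ^ (α - 1)) =
      sin θ ^ (α - 1) * (sin θ * q - α * cos θ * p) := by
    rw [rpow_sub_one hθ.ne']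
    field_simp
  rw [hode, hwronskian, mul_eq_zero_iff_left (by positivity), mul_eq_zero_iff_left (by positivity)]

theorem solvesRightPassageODE_normalizedTail_sin_rpow (hκ : κ ≠ 0) (hα : α = 2 * (4 - κ) / κ)
    (hα1 : -1 < α) : SolvesRightPassageODE κ (normalizedTail (fun u ↦ sin u ^ α) 0 π) := by
  intro θ hθ
  have hsin := sin_pos_of_mem_Ioo hθ
  have hint := intervalIntegrable_sin_rpow hα1
  have hcont := (contDiffOn_sin_rpow (α := α) (n := 0)).continuousOn
  rw [right_passage_ode_iff_wronskian_eq_zero hκ hα hsin,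
    (hasDerivAt_normalizedTail hint hcont hθ).deriv,
    (hasDerivAt_deriv_normalizedTail hint hcont hθ (hasDerivAt_sin_rpow hsin.ne')).deriv]
  ring

theorem SolvesRightPassageODE.eqOn_normalizedTail_sin_rpow {g : ℝ → ℝ}
    (hode : SolvesRightPassageODE κ g) (hκ : κ ≠ 0) (hα : α = 2 * (4 - κ) / κ) (hα1 : -1 < α)
    (hg : ContinuousOn g (Icc 0 π)) (hg2 : ContDiffOn ℝ 2 g (Ioo 0 π)) (hg0 : g 0 = 1)
    (hgπ : g π = 0) : EqOn g (normalizedTail (fun u ↦ sin u ^ α) 0 π) (Icc 0 π) := by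
  have hsin : ∀ θ ∈ Ioo 0 π, 0 < sin θ := fun θ hθ ↦ sin_pos_of_mem_Ioo hθ
  have hg' : ∀ θ ∈ Ioo 0 π, HasDerivAt g (deriv g θ) θ := fun θ hθ ↦
    ((hg2.differentiableOn two_ne_zero).differentiableAt (isOpen_Ioo.mem_nhds hθ)).hasDerivAt
  have hg'' : ∀ θ ∈ Ioo 0 π, HasDerivAt (deriv g) (deriv (deriv g) θ) θ := fun θ hθ ↦
    (((hg2.deriv_of_isOpen isOpen_Ioo one_add_one_eq_two.le).differentiableOn
      one_ne_zero).differentiableAt (isOpen_Ioo.mem_nhds hθ)).hasDerivAt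
  obtain ⟨c, hc⟩ := exists_eqOn_const_mul_of_wronskian_eq_zero isOpen_Ioo isPreconnected_Ioo hg''
    (fun θ hθ ↦ hasDerivAt_sin_rpow (hsin θ hθ).ne')
    (fun θ hθ ↦ (rpow_pos_of_pos (hsin θ hθ) α).ne')
    (fun θ hθ ↦ (right_passage_ode_iff_wronskian_eq_zero hκ hα (hsin θ hθ)).mp (hode θ hθ))
  exact eqOn_normalizedTail_of_hasDerivAt (intervalIntegrable_sin_rpow hα1) hg
    (fun θ hθ ↦ hc hθ ▸ hg' θ hθ) hg0 hgπ

end RightPassage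

theorem sle_right_passage_bvp_general (κ : ℝ) (hκ0 : 0 < κ) (hκ8 : κ < 8)
    (α : ℝ) (hα : α = 2 * (4 - κ) / κ)
    (f : ℝ → ℝ)
    (hf : ∀ θ : ℝ,
      f θ = (∫ u in θ..π, sin u ^ α) / (∫ u in (0 : ℝ)..π, sin u ^ α)) :
    ContinuousOn f (Icc 0 π) ∧
    ContDiffOn ℝ 2 f (Ioo 0 π) ∧
    f 0 = 1 ∧ f π = 0 ∧
    SolvesRightPassageODE κ f ∧
    (∀ g : ℝ → ℝ, ContinuousOn g (Icc 0 π) → ContDiffOn ℝ 2 g (Ioo 0 π) →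
      SolvesRightPassageODE κ g → g 0 = 1 → g π = 0 → EqOn g f (Icc 0 π)) := by
  obtain rfl : f = normalizedTail (fun u ↦ sin u ^ α) 0 π := funext hf
  have hα1 : -1 < α := neg_one_lt_sle_exponent hκ0 hκ8 hα
  have hint := intervalIntegrable_sin_rpow hα1
  refine ⟨?_, ?_, normalizedTail_left (integral_sin_rpow_pos hα1).ne', normalizedTail_right,
    solvesRightPassageODE_normalizedTail_sin_rpow hκ0.ne' hα hα1, fun g hg hg2 hode hg0 hgπ ↦
      hode.eqOn_normalizedTail_sin_rpow hκ0.ne' hα hα1 hg hg2 hg0 hgπ⟩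
  · simpa only [uIcc_of_le pi_pos.le] using continuousOn_normalizedTail hint
  · simpa [one_add_one_eq_two] using contDiffOn_normalizedTail (n := 1) hint contDiffOn_sin_rpow

/-- The boundary value problem characterizing the probability that a point at
angle `θ` lies to the right of a chordal `SLE_κ` trace (`0 < κ ≤ 4`):
`f(θ) = (∫_θ^π sin^α u du) / (∫_0^π sin^α u du)` with `α = 2(4-κ)/κ` is
continuous on `[0,π]`, `C²` on `(0,π)`, satisfies `f(0) = 1`, `f(π) = 0` and
`(κ/2) sin²θ f''(θ) + ((κ-4)/2) sin(2θ) f'(θ) = 0` on `(0,π)`, and it is the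
unique such function. -/
theorem sle_right_passage_bvp (κ : ℝ) (hκ0 : 0 < κ) (hκ4 : κ ≤ 4)
    (α : ℝ) (hα : α = 2 * (4 - κ) / κ)
    (f : ℝ → ℝ)
    (hf : ∀ θ : ℝ,
      f θ = (∫ u in θ..π, Real.sin u ^ α) / (∫ u in (0 : ℝ)..π, Real.sin u ^ α)) :
    ContinuousOn f (Icc 0 π) ∧
    ContDiffOn ℝ 2 f (Ioo 0 π) ∧
    f 0 = 1 ∧ f π = 0 ∧
    (∀ θ ∈ Ioo (0 : ℝ) π,
      κ / 2 * Real.sin θ ^ 2 * deriv (deriv f) θ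
        + (κ - 4) / 2 * Real.sin (2 * θ) * deriv f θ = 0) ∧
    (∀ g : ℝ → ℝ, ContinuousOn g (Icc 0 π) → ContDiffOn ℝ 2 g (Ioo 0 π) →
      (∀ θ ∈ Ioo (0 : ℝ) π,
        κ / 2 * Real.sin θ ^ 2 * deriv (deriv g) θ
          + (κ - 4) / 2 * Real.sin (2 * θ) * deriv g θ = 0) →
      g 0 = 1 → g π = 0 → EqOn g f (Icc 0 π)) :=
  sle_right_passage_bvp_general κ hκ0 (by linarith) α hα f hf
end

section
/- For every real number x > 1, the integral over t ∈ (−∞, ∞) of (1/(1 + cosh(t)))·[(x−1)/(t² + (x−1)²π²) − (x+1)/(t² + (x+1)²π²)] dt equals 4/(π²·x²). -/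
open Real

/-!
Under the substitution `u = sigmoid t`, the Beta integral `B(1 + z, 1 - z) = π z / sin (π z)`
becomes half the integral of `exp (z t) / (1 + cosh t)`; on the imaginary axis this says that
`1 / (1 + cosh)` has cosine transform `2 π s / sinh (π s)`. On the other hand `a / (t² + a²)` is the
cosine transform of `exp (-a s)` on the half-line, so the bracket in the theorem is, up to a factor
`π`, the cosine transform of `exp (-(x - 1) π s) - exp (-(x + 1) π s) = 2 exp (-x π s) sinh (π s)`.
Moving the cosine transform from one factor to the other cancels `sinh (π s)` and leaves
`∫₀^∞ 4 π s exp (-x π s) ds`.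
-/

open MeasureTheory Set

section Sigmoid

lemma sigmoid_mul_sigmoid_neg (t : ℝ) :
    sigmoid t * sigmoid (-t) = 1 / (2 * (1 + cosh t)) := by
  rw [sigmoid_def, sigmoid_def, neg_neg, cosh_eq, exp_neg]
  field_simp
  ring

lemma log_sigmoid_sub_log_sigmoid_neg (t : ℝ) : log (sigmoid t) - log (sigmoid (-t)) = t := by
  rw [← sigmoid_mul_rexp_neg, log_mul (sigmoid_pos t).ne' (exp_ne_zero _), log_exp]
  ring

lemma ofReal_sigmoid_ne_zero (t : ℝ) : (sigmoid t : ℂ) ≠ 0 :=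
  Complex.ofReal_ne_zero.2 (sigmoid_pos t).ne'

lemma sigmoid_cpow_mul_sigmoid_neg_cpow_neg (z : ℂ) (t : ℝ) :
    (sigmoid t : ℂ) ^ z * (sigmoid (-t) : ℂ) ^ (-z) = Complex.exp (z * t) := by
  rw [Complex.cpow_def_of_ne_zero (ofReal_sigmoid_ne_zero _),
    Complex.cpow_def_of_ne_zero (ofReal_sigmoid_ne_zero _), ← Complex.exp_add,
    ← Complex.ofReal_log (sigmoid_nonneg _), ← Complex.ofReal_log (sigmoid_nonneg _)]
  conv_rhs => rw [← log_sigmoid_sub_log_sigmoid_neg t]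
  push_cast
  ring_nf

lemma sigmoid_cpow_one_add_mul_sigmoid_neg_cpow_one_sub (z : ℂ) (t : ℝ) :
    (sigmoid t : ℂ) ^ (1 + z) * (sigmoid (-t) : ℂ) ^ (1 - z)
      = Complex.exp (z * t) / (1 + Complex.cosh t) / 2 := by
  have hprod : (sigmoid t : ℂ) * sigmoid (-t) = 1 / (2 * (1 + Complex.cosh t)) := by
    exact_mod_cast congrArg Complex.ofReal (sigmoid_mul_sigmoid_neg t)
  calc (sigmoid t : ℂ) ^ (1 + z) * (sigmoid (-t) : ℂ) ^ (1 - z)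
      = (sigmoid t * sigmoid (-t)) * ((sigmoid t : ℂ) ^ z * (sigmoid (-t) : ℂ) ^ (-z)) := by
        rw [sub_eq_add_neg, Complex.cpow_add _ _ (ofReal_sigmoid_ne_zero _),
          Complex.cpow_add _ _ (ofReal_sigmoid_ne_zero _), Complex.cpow_one, Complex.cpow_one]
        ring
    _ = Complex.exp (z * t) / (1 + Complex.cosh t) / 2 := by
        rw [hprod, sigmoid_cpow_mul_sigmoid_neg_cpow_neg, one_div, mul_inv]
        ring

variable {E : Type*} [NormedAddCommGroup E] [NormedSpace ℝ E]

lemma integrableOn_Ioo_iff_integrable_sigmoid (g : ℝ → E) :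
    IntegrableOn g (Ioo 0 1) ↔
      Integrable fun t ↦ (sigmoid t * sigmoid (-t)) • g (sigmoid t) := by
  simpa only [image_univ, range_sigmoid, integrableOn_univ, sigmoid_neg] using
    integrableOn_image_iff_integrableOn_deriv_smul_of_monotoneOn MeasurableSet.univ
      (fun t _ ↦ (hasDerivAt_sigmoid t).hasDerivWithinAt) (sigmoid_monotone.monotoneOn univ) g

lemma integral_Ioo_eq_integral_sigmoid (g : ℝ → E) :
    ∫ u in Ioo 0 1, g u = ∫ t, (sigmoid t * sigmoid (-t)) • g (sigmoid t) := by
  simpa only [image_univ, range_sigmoid, setIntegral_univ, sigmoid_neg] using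
    integral_image_eq_integral_deriv_smul_of_monotoneOn MeasurableSet.univ
      (fun t _ ↦ (hasDerivAt_sigmoid t).hasDerivWithinAt) (sigmoid_monotone.monotoneOn univ) g

end Sigmoid

section Beta

lemma sigmoid_smul_betaIntegrand (u v : ℂ) (t : ℝ) :
    (sigmoid t * sigmoid (-t)) •
        ((sigmoid t : ℂ) ^ (u - 1) * (1 - (sigmoid t : ℂ)) ^ (v - 1))
      = (sigmoid t : ℂ) ^ u * (sigmoid (-t) : ℂ) ^ v := by
  have hneg : 1 - (sigmoid t : ℂ) = sigmoid (-t) := by rw [sigmoid_neg]; push_cast; rfl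
  have h₁ := ofReal_sigmoid_ne_zero t
  have h₂ := ofReal_sigmoid_ne_zero (-t)
  rw [hneg, Complex.cpow_sub _ _ h₁, Complex.cpow_sub _ _ h₂, Complex.cpow_one, Complex.cpow_one,
    Complex.real_smul, Complex.ofReal_mul]
  field_simp

lemma integrable_sigmoid_cpow_mul_sigmoid_neg_cpow {u v : ℂ} (hu : 0 < u.re) (hv : 0 < v.re) :
    Integrable fun t : ℝ ↦ (sigmoid t : ℂ) ^ u * (sigmoid (-t) : ℂ) ^ v := by
  have h := Complex.betaIntegral_convergent hu hv
  rw [intervalIntegrable_iff_integrableOn_Ioo_of_le zero_le_one,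
    integrableOn_Ioo_iff_integrable_sigmoid] at h
  simpa only [sigmoid_smul_betaIntegrand] using h

lemma betaIntegral_eq_integral_sigmoid (u v : ℂ) :
    Complex.betaIntegral u v = ∫ t : ℝ, (sigmoid t : ℂ) ^ u * (sigmoid (-t) : ℂ) ^ v := by
  rw [Complex.betaIntegral, intervalIntegral.integral_of_le zero_le_one,
    integral_Ioc_eq_integral_Ioo, integral_Ioo_eq_integral_sigmoid]
  simp only [sigmoid_smul_betaIntegrand]

lemma one_add_re_pos {z : ℂ} (hz : |z.re| < 1) : 0 < (1 + z).re := by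
  rw [Complex.add_re, Complex.one_re]
  linarith [neg_lt_of_abs_lt hz]

lemma one_sub_re_pos {z : ℂ} (hz : |z.re| < 1) : 0 < (1 - z).re := by
  rw [Complex.sub_re, Complex.one_re]
  linarith [lt_of_abs_lt hz]

lemma betaIntegral_one_add_one_sub {z : ℂ} (hz₀ : z ≠ 0) (hz : |z.re| < 1) :
    Complex.betaIntegral (1 + z) (1 - z) = π * z / Complex.sin (π * z) := by
  calc Complex.betaIntegral (1 + z) (1 - z)
      = Complex.Gamma (1 + z) * Complex.Gamma (1 - z) := by
        rw [Complex.Gamma_mul_Gamma_eq_betaIntegral (one_add_re_pos hz) (one_sub_re_pos hz),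
          add_add_sub_cancel, one_add_one_eq_two, Complex.Gamma_ofNat_eq_factorial]
        simp
    _ = π * z / Complex.sin (π * z) := by
        rw [add_comm, Complex.Gamma_add_one _ hz₀, mul_assoc, Complex.Gamma_mul_Gamma_one_sub]
        ring

end Beta

section Cosh

lemma integrable_exp_mul_div_one_add_cosh {z : ℂ} (hz : |z.re| < 1) :
    Integrable fun t : ℝ ↦ Complex.exp (z * t) / (1 + Complex.cosh t) := by
  have h := integrable_sigmoid_cpow_mul_sigmoid_neg_cpow (one_add_re_pos hz) (one_sub_re_pos hz)
  simp only [sigmoid_cpow_one_add_mul_sigmoid_neg_cpow_one_sub] at h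
  simpa using h.mul_const 2

lemma integral_exp_mul_div_one_add_cosh {z : ℂ} (hz₀ : z ≠ 0) (hz : |z.re| < 1) :
    ∫ t : ℝ, Complex.exp (z * t) / (1 + Complex.cosh t) = 2 * π * z / Complex.sin (π * z) := by
  have h := betaIntegral_one_add_one_sub hz₀ hz
  simp only [betaIntegral_eq_integral_sigmoid, sigmoid_cpow_one_add_mul_sigmoid_neg_cpow_one_sub,
    integral_div] at h
  linear_combination 2 * h

lemma integrable_one_div_one_add_cosh : Integrable fun t : ℝ ↦ 1 / (1 + cosh t) := by
  have h : Integrable fun t : ℝ ↦ ((1 / (1 + cosh t) : ℝ) : ℂ) := by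
    simpa using integrable_exp_mul_div_one_add_cosh (z := 0) (by simp)
  exact h.re

lemma integral_cos_mul_one_div_one_add_cosh {s : ℝ} (hs : s ≠ 0) :
    ∫ t, cos (t * s) * (1 / (1 + cosh t)) = 2 * π * s / sinh (π * s) := by
  have hre : |(s * Complex.I).re| < 1 := by simp
  have hcos (t : ℝ) : (Complex.exp (s * Complex.I * t) / (1 + Complex.cosh t)).re
      = cos (t * s) * (1 / (1 + cosh t)) := by
    rw [← Complex.ofReal_cosh, ← Complex.ofReal_one, ← Complex.ofReal_add, Complex.div_ofReal_re,
      mul_right_comm, ← Complex.ofReal_mul, Complex.exp_ofReal_mul_I_re, mul_comm s, mul_one_div]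
  have hsinh : 2 * π * (s * Complex.I) / Complex.sin (π * (s * Complex.I))
      = ((2 * π * s / sinh (π * s) : ℝ) : ℂ) := by
    rw [← mul_assoc (π : ℂ), Complex.sin_mul_I, ← mul_assoc,
      mul_div_mul_right _ _ Complex.I_ne_zero]
    push_cast
    rfl
  calc ∫ t, cos (t * s) * (1 / (1 + cosh t))
      = (∫ t : ℝ, Complex.exp (s * Complex.I * t) / (1 + Complex.cosh t)).re := by
        simpa only [RCLike.re_to_complex, hcos] using
          integral_re (integrable_exp_mul_div_one_add_cosh hre)
    _ = 2 * π * s / sinh (π * s) := by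
        rw [integral_exp_mul_div_one_add_cosh (by simpa using hs) hre, hsinh, Complex.ofReal_re]

end Cosh

lemma integral_integral_mul_smul_swap {α β 𝕜 E : Type*} [MeasurableSpace α] [MeasurableSpace β]
    [RCLike 𝕜] [NormedAddCommGroup E] [NormedSpace ℝ E] [NormedSpace 𝕜 E] [CompleteSpace E]
    {μ : Measure α} {ν : Measure β} [SFinite μ] [SFinite ν]
    {k : α → β → 𝕜} {f : α → E} {g : β → 𝕜} {C : ℝ}
    (hk : AEStronglyMeasurable (Function.uncurry k) (μ.prod ν)) (hkC : ∀ x y, ‖k x y‖ ≤ C)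
    (hf : Integrable f μ) (hg : Integrable g ν) :
    ∫ x, (∫ y, k x y * g y ∂ν) • f x ∂μ = ∫ y, g y • ∫ x, k x y • f x ∂μ ∂ν := by
  have hprod : Integrable (fun p : α × β ↦ k p.1 p.2 • g p.2 • f p.1) (μ.prod ν) :=
    (hg.smul_prod hf).swap.bdd_smul C hk (.of_forall fun p ↦ hkC p.1 p.2)
  calc ∫ x, (∫ y, k x y * g y ∂ν) • f x ∂μ
      = ∫ x, ∫ y, k x y • g y • f x ∂ν ∂μ := by
        simp only [← integral_smul_const, smul_smul]
    _ = ∫ y, ∫ x, k x y • g y • f x ∂μ ∂ν := integral_integral_swap hprod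
    _ = ∫ y, g y • ∫ x, k x y • f x ∂μ ∂ν := by
        simp only [smul_comm (k _ _), integral_smul]

section CosineTransform

lemma re_exp_neg_add_mul_I_mul (a t s : ℝ) :
    (Complex.exp ((-a + t * Complex.I) * s)).re = cos (t * s) * exp (-a * s) := by
  simp [Complex.exp_re, mul_comm]

variable {a : ℝ}

lemma integrableOn_cos_mul_exp_neg_mul_Ioi (ha : 0 < a) (t : ℝ) :
    IntegrableOn (fun s ↦ cos (t * s) * exp (-a * s)) (Ioi 0) := by
  rw [IntegrableOn]
  simpa only [RCLike.re_to_complex, re_exp_neg_add_mul_I_mul] using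
    (integrableOn_exp_mul_complex_Ioi (a := -a + t * Complex.I) (by simpa using ha) 0).re

lemma integral_cos_mul_exp_neg_mul_Ioi (ha : 0 < a) (t : ℝ) :
    ∫ s in Ioi 0, cos (t * s) * exp (-a * s) = a / (t ^ 2 + a ^ 2) := by
  have hre : (-a + t * Complex.I : ℂ).re < 0 := by simpa using ha
  calc ∫ s in Ioi 0, cos (t * s) * exp (-a * s)
      = (∫ s : ℝ in Ioi 0, Complex.exp ((-a + t * Complex.I) * s)).re := by
        simpa only [RCLike.re_to_complex, re_exp_neg_add_mul_I_mul] using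
          integral_re (integrableOn_exp_mul_complex_Ioi hre 0)
    _ = a / (t ^ 2 + a ^ 2) := by
        rw [integral_exp_mul_complex_Ioi hre]
        simp [Complex.div_re, Complex.normSq_apply, sq, add_comm]

lemma exp_add_sub_exp_sub (u v : ℝ) : exp (u + v) - exp (u - v) = 2 * exp u * sinh v := by
  rw [sinh_eq, sub_eq_add_neg u, exp_add, exp_add]
  ring

lemma two_mul_exp_neg_mul_mul_sinh_mul (b c s : ℝ) :
    2 * exp (-b * s) * sinh (c * s) = exp (-(b - c) * s) - exp (-(b + c) * s) := by
  rw [← exp_add_sub_exp_sub]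
  ring_nf

variable {b c : ℝ}

lemma integrableOn_exp_neg_mul_mul_sinh_mul_Ioi (hc : |c| < b) :
    IntegrableOn (fun s ↦ 2 * exp (-b * s) * sinh (c * s)) (Ioi 0) := by
  obtain ⟨hc₁, hc₂⟩ := abs_lt.1 hc
  simp only [two_mul_exp_neg_mul_mul_sinh_mul]
  exact (integrableOn_exp_mul_Ioi (by linarith) 0).sub (integrableOn_exp_mul_Ioi (by linarith) 0)

lemma integral_cos_mul_exp_neg_mul_mul_sinh_mul_Ioi (hc : |c| < b) (t : ℝ) :
    ∫ s in Ioi 0, cos (t * s) * (2 * exp (-b * s) * sinh (c * s))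
      = (b - c) / (t ^ 2 + (b - c) ^ 2) - (b + c) / (t ^ 2 + (b + c) ^ 2) := by
  obtain ⟨hc₁, hc₂⟩ := abs_lt.1 hc
  have hsub : 0 < b - c := by linarith
  have hadd : 0 < b + c := by linarith
  simp only [two_mul_exp_neg_mul_mul_sinh_mul, mul_sub]
  rw [integral_sub (integrableOn_cos_mul_exp_neg_mul_Ioi hsub t)
    (integrableOn_cos_mul_exp_neg_mul_Ioi hadd t), integral_cos_mul_exp_neg_mul_Ioi hsub,
    integral_cos_mul_exp_neg_mul_Ioi hadd]

end CosineTransform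

lemma integral_mul_exp_neg_mul_Ioi {b : ℝ} (hb : 0 < b) :
    ∫ s in Ioi 0, s * exp (-b * s) = 1 / b ^ 2 := by
  simpa [show (2 : ℝ) - 1 = 1 by norm_num] using integral_rpow_mul_exp_neg_mul_Ioi two_pos hb

lemma exp_neg_mul_mul_sinh_mul_mul_integral_cos (b : ℝ) {s : ℝ} (hs : s ≠ 0) :
    2 * exp (-b * s) * sinh (π * s) * ∫ t, cos (t * s) * (1 / (1 + cosh t))
      = 4 * π * (s * exp (-b * s)) := by
  have hsinh : sinh (π * s) ≠ 0 := sinh_ne_zero.2 (mul_ne_zero pi_ne_zero hs)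
  rw [integral_cos_mul_one_div_one_add_cosh hs, ← mul_div_assoc, div_eq_iff hsinh]
  ring

/-- For `x > 1`,
`∫_ℝ (1/(1+cosh t)) [ (x-1)/(t² + (x-1)²π²) - (x+1)/(t² + (x+1)²π²) ] dt = 4/(π² x²)`. -/
theorem integral_cosh_winding (x : ℝ) (hx : 1 < x) :
    ∫ t : ℝ, (1 / (1 + Real.cosh t)) *
        ((x - 1) / (t ^ 2 + (x - 1) ^ 2 * π ^ 2) - (x + 1) / (t ^ 2 + (x + 1) ^ 2 * π ^ 2))
      = 4 / (π ^ 2 * x ^ 2) := by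
  have hπ : |π| < x * π := by rwa [abs_of_pos pi_pos, lt_mul_iff_one_lt_left pi_pos]
  have hx₀ : 0 < x := one_pos.trans hx
  calc
    _ = π⁻¹ * ∫ t, (∫ s in Ioi 0, cos (t * s) * (2 * exp (-(x * π) * s) * sinh (π * s))) •
          (1 / (1 + cosh t)) := by
        rw [← integral_const_mul]
        congr 1 with t
        rw [integral_cos_mul_exp_neg_mul_mul_sinh_mul_Ioi hπ, smul_eq_mul,
          ← sub_one_mul, ← add_one_mul, mul_pow, mul_pow]
        field_simp
    _ = π⁻¹ * ∫ s in Ioi 0, (2 * exp (-(x * π) * s) * sinh (π * s)) *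
          ∫ t, cos (t * s) * (1 / (1 + cosh t)) :=
        congrArg _ <| integral_integral_mul_smul_swap (by fun_prop) (fun _ _ ↦ abs_cos_le_one _)
          integrable_one_div_one_add_cosh (integrableOn_exp_neg_mul_mul_sinh_mul_Ioi hπ)
    _ = π⁻¹ * ∫ s in Ioi 0, 4 * π * (s * exp (-(x * π) * s)) := by
        congr 1
        exact setIntegral_congr_fun measurableSet_Ioi fun s (hs : 0 < s) ↦
          exp_neg_mul_mul_sinh_mul_mul_integral_cos _ hs.ne'
    _ = 4 / (π ^ 2 * x ^ 2) := by
        rw [integral_const_mul, integral_mul_exp_neg_mul_Ioi (mul_pos hx₀ pi_pos)]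
        field_simp
end

section
/- For every real number x > 1 that is not an even integer, Σ_{k=1}^∞ [ (2k−1)(x−1)/(((x−1)² − (2k−1)²)²) − (2k−1)(x+1)/(((x+1)² − (2k−1)²)²) ] = −1/(2x²). -/
open Asymptotics Filter

theorem hasSum_succ_sub_self {G : Type*} [AddCommGroup G] [TopologicalSpace G]
    [IsTopologicalAddGroup G] {f : ℕ → G} (hf : Summable f) :
    HasSum (fun n => f (n + 1) - f n) (-f 0) := by
  obtain ⟨s, hs⟩ := hf
  have hshift : HasSum (fun n => f (n + 1)) (s - f 0) := by
    simpa using (hasSum_nat_add_iff' 1).2 hs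
  simpa using hshift.sub hs

theorem summable_one_div_mul_natCast_add_pow {𝕜 : Type*} [RCLike 𝕜] {c : 𝕜} (hc : c ≠ 0) (a : 𝕜)
    {p : ℕ} (hp : 1 < p) : Summable fun n : ℕ => 1 / (c * n + a) ^ p := by
  have hnorm : Tendsto (fun n : ℕ => ‖c * (n : 𝕜)‖) atTop atTop := by
    simpa using tendsto_natCast_atTop_atTop.const_mul_atTop (norm_pos_iff.2 hc)
  have hequiv : (fun n : ℕ => c * (n : 𝕜) + a) ~[atTop] fun n : ℕ => c * (n : 𝕜) :=
    IsEquivalent.refl.add_const_of_norm_tendsto_atTop hnorm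
  have hsum : Summable fun n : ℕ => 1 / ‖c * (n : 𝕜)‖ ^ p := by
    simpa [mul_pow, mul_comm] using (Real.summable_one_div_nat_pow.2 hp).mul_left (1 / ‖c‖ ^ p)
  refine summable_of_isBigO_nat hsum ?_
  simpa using! (hequiv.pow p).inv.isBigO.norm_right

theorem mul_div_sq_sub_sq_sq_eq {K : Type*} [Field K] [NeZero (2 : K)] {a m : K}
    (hsub : a - m ≠ 0) (hadd : a + m ≠ 0) :
    m * a / (a ^ 2 - m ^ 2) ^ 2 = (1 / (a - m) ^ 2 - 1 / (a + m) ^ 2) / 4 := by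
  have h4 : (4 : K) ≠ 0 := by
    simpa [show (4 : K) = 2 * 2 by norm_num] using NeZero.ne (2 : K)
  rw [sq_sub_sq]
  field_simp
  ring

/-- The discrete antiderivative in `t`, with step `2`, through which the series telescopes: equal
double poles at `t = x` and `t = -x`. -/
def doublePoles {K : Type*} [Field K] (x t : K) : K :=
  (1 / (t - x) ^ 2 + 1 / (t + x) ^ 2) / 4

theorem doublePoles_add_one_sub_doublePoles_sub_one {K : Type*} [Field K] [NeZero (2 : K)] {x m : K}
    (h₁ : x - 1 ≠ m) (h₂ : x - 1 ≠ -m) (h₃ : x + 1 ≠ m) (h₄ : x + 1 ≠ -m) :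
    doublePoles x (m + 1) - doublePoles x (m - 1) =
      m * (x - 1) / ((x - 1) ^ 2 - m ^ 2) ^ 2 - m * (x + 1) / ((x + 1) ^ 2 - m ^ 2) ^ 2 := by
  rw [mul_div_sq_sub_sq_sq_eq (sub_ne_zero.2 h₁) (mt eq_neg_of_add_eq_zero_left h₂),
    mul_div_sq_sub_sq_sq_eq (sub_ne_zero.2 h₃) (mt eq_neg_of_add_eq_zero_left h₄), doublePoles,
    doublePoles]
  ring

section RCLike

variable {𝕜 : Type*} [RCLike 𝕜]

theorem summable_doublePoles (x : 𝕜) : Summable fun k : ℕ => doublePoles x (2 * k) := by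
  have hsum (a : 𝕜) : Summable fun k : ℕ => 1 / (2 * (k : 𝕜) + a) ^ 2 :=
    summable_one_div_mul_natCast_add_pow two_ne_zero a one_lt_two
  simpa only [doublePoles, sub_eq_add_neg] using ((hsum (-x)).add (hsum x)).div_const 4

theorem telescoping_series_identity_general {x : 𝕜} (hx : ∀ m : ℤ, x ≠ 2 * m) :
    HasSum
      (fun k : ℕ =>
        (2 * (k : 𝕜) + 1) * (x - 1) / ((x - 1) ^ 2 - (2 * (k : 𝕜) + 1) ^ 2) ^ 2
          - (2 * (k : 𝕜) + 1) * (x + 1) / ((x + 1) ^ 2 - (2 * (k : 𝕜) + 1) ^ 2) ^ 2)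
      (-1 / (2 * x ^ 2)) := by
  have hzero : doublePoles x (2 * (0 : ℕ)) = 1 / (2 * x ^ 2) := by
    simp only [doublePoles, Nat.cast_zero, mul_zero, zero_sub, zero_add, neg_sq]
    ring
  have hterm (k : ℕ) :
      doublePoles x (2 * (k + 1 : ℕ)) - doublePoles x (2 * k) =
        (2 * (k : 𝕜) + 1) * (x - 1) / ((x - 1) ^ 2 - (2 * (k : 𝕜) + 1) ^ 2) ^ 2
          - (2 * (k : 𝕜) + 1) * (x + 1) / ((x + 1) ^ 2 - (2 * (k : 𝕜) + 1) ^ 2) ^ 2 := by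
    rw [← doublePoles_add_one_sub_doublePoles_sub_one]
    · push_cast
      ring_nf
    · exact fun h => hx (k + 1) (by push_cast; linear_combination h)
    · exact fun h => hx (-k) (by push_cast; linear_combination h)
    · exact fun h => hx k (by push_cast; linear_combination h)
    · exact fun h => hx (-k - 1) (by push_cast; linear_combination h)
  simpa only [hterm, hzero, ← neg_div] using hasSum_succ_sub_self (summable_doublePoles x)

end RCLike

/-- For `x > 1` not an even integer,
`Σ_{k=1}^∞ [ (2k-1)(x-1)/((x-1)² - (2k-1)²)² - (2k-1)(x+1)/((x+1)² - (2k-1)²)² ] = -1/(2x²)`,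
where the sum over `k ≥ 1` is written as a sum over `k : ℕ` via `k ↦ k + 1`
(so that `2k - 1` becomes `2k + 1`). -/
theorem telescoping_series_identity (x : ℝ) (hx : 1 < x)
    (hxeven : ∀ m : ℤ, x ≠ 2 * m) :
    ∑' k : ℕ,
        ((2 * (k : ℝ) + 1) * (x - 1) / ((x - 1) ^ 2 - (2 * (k : ℝ) + 1) ^ 2) ^ 2
          - (2 * (k : ℝ) + 1) * (x + 1) / ((x + 1) ^ 2 - (2 * (k : ℝ) + 1) ^ 2) ^ 2)
      = -1 / (2 * x ^ 2) :=
  (telescoping_series_identity_general hxeven).tsum_eq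
end
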